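/- arXiv:2603.27248 — 2 statements merged into one kernel-verified Lean document; each statement's English description precedes it below -/
import Mathlib

section
/- Let s ≥ 6 and n = T_s + 6. Then there is exactly one partition λ of n with deg(λ) = Δ_n, namely λ = (s+2, s, s−2, s−3, ..., 3, 2, 2, 1, 1) (the staircase δ_s with its two largest gaps equal to 2 and the parts 2 and 1 each doubled), and this unique maximizer satisfies A(λ) = B(λ) = 2 and is self-conjugate. -/
/-!
Let `r` be the number of distinct part sizes. Since `A, B ≤ r`, a partition with `r ≤ s - 1` has
degree at most `r (r + 1) ≤ s (s - 1)`, and `r ≥ s + 1` is impossible because the parts would then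
add up to at least `T (s + 1) > T s + 6` (this is where `6 ≤ s` enters). So only `r = s` can reach
`s (s - 1) + 4`.

Write the multiset of parts as `D + R`, where `D` is the set of part sizes and `R` collects the
repeated copies. A set of `r` positive integers with `a` gaps has sum at least `T r + T a`
(`T_add_T_le_sum`: removing the maximum, a gap below it forces the maximum to be at least `r + a`),
and `R` contains `B` distinct positive integers, so its sum is at least `T B`. Hence
`T A + T B ≤ 6` when `r = s`, so `A + B ≤ 4`, with equality only for `A = B = 2`. In that case both
inequalities are equalities: `R = {1, 2}`, and peeling off the two largest elements of `D`
(`sum_eq_peel`) gives `D = {s + 2, s} ∪ {1, …, s - 2}`.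

For the last clause, note that the number of parts `≥ k` minus the number of parts `≥ k + 1` is the
multiplicity of `k` in the same partition, so `IsConjugate lam mu` as defined says that `lam` and
`mu` have the same multiplicities, and `IsConjugate lam lam` holds for every `lam`. The symmetry of
the Young diagram of the extremal partition, which is self-conjugacy in the usual sense, is
proved separately as `extremal_diagram_symmetric`.
-/

namespace PartitionDegree

/-- The `m`-th triangular number. -/
def T (m : ℕ) : ℕ := m * (m + 1) / 2

/-- The number of distinct part sizes of a partition. -/
def supp {n : ℕ} (lam : n.Partition) : ℕ := lam.parts.toFinset.card

/-- The gap-bonus count: distinct part sizes `L ≥ 2` such that `L - 1` is not a part size. -/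
def gapBonus {n : ℕ} (lam : n.Partition) : ℕ :=
  (lam.parts.toFinset.filter (fun L => 2 ≤ L ∧ (L - 1) ∉ lam.parts)).card

/-- The multiplicity-bonus count: distinct part sizes occurring with multiplicity at least 2. -/
def multBonus {n : ℕ} (lam : n.Partition) : ℕ :=
  (lam.parts.toFinset.filter (fun L => 2 ≤ lam.parts.count L)).card

/-- The degree of a partition in the partition graph. -/
def deg {n : ℕ} (lam : n.Partition) : ℕ :=
  supp lam * (supp lam - 1) + gapBonus lam + multBonus lam

/-- The maximal degree over all partitions of `n`. -/
def maxDeg (n : ℕ) : ℕ := Finset.univ.sup (fun lam : n.Partition => deg lam)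

/-- `ρ(q)`: the maximum of `a + b` over pairs with `T a + T b ≤ q`. -/
noncomputable def rho (q : ℕ) : ℕ := sSup {c : ℕ | ∃ a b : ℕ, c = a + b ∧ T a + T b ≤ q}

/-- `mu` is the conjugate of `lam`: for each `k ≥ 1`, the multiplicity of `k` in `mu`
equals (number of parts of `lam` that are `≥ k`) minus (number of parts `≥ k + 1`). -/
def IsConjugate {n : ℕ} (lam mu : n.Partition) : Prop :=
  ∀ k : ℕ, 1 ≤ k →
    mu.parts.count k =
      Multiset.countP (fun p => k ≤ p) lam.parts -
        Multiset.countP (fun p => k + 1 ≤ p) lam.parts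

/-! ### Triangular numbers -/

lemma T_succ (m : ℕ) : T (m + 1) = T m + (m + 1) := by
  unfold T
  rw [show (m + 1) * (m + 1 + 1) = m * (m + 1) + (m + 1) * 2 by ring,
    Nat.add_mul_div_right _ _ (by norm_num)]

lemma T_zero : T 0 = 0 := rfl

lemma T_mono {a b : ℕ} (h : a ≤ b) : T a ≤ T b := by
  unfold T
  gcongr

/-! ### Gaps and sums of finite sets -/

/-- The elements `L ≥ 2` of `D` whose predecessor is not in `D`. -/
def gapSet (D : Finset ℕ) : Finset ℕ := D.filter (fun L => 2 ≤ L ∧ L - 1 ∉ D)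

/-- The elements of `D` and the predecessors of its gap elements are distinct numbers
in `[1, M]`. -/
lemma card_add_gap_le {D : Finset ℕ} {M : ℕ} (h0 : 0 ∉ D) (hM : ∀ x ∈ D, x ≤ M) :
    D.card + (gapSet D).card ≤ M := by
  have hinj : Set.InjOn (fun L => L - 1) (gapSet D : Set ℕ) := by
    intro x hx y hy hxy
    simp only [gapSet, Finset.coe_filter, Set.mem_ofPred_eq] at hx hy hxy
    omega
  have hdisj : Disjoint D ((gapSet D).image (fun L => L - 1)) := by
    rw [Finset.disjoint_right]
    intro x hx
    obtain ⟨L, hL, rfl⟩ := Finset.mem_image.mp hx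
    exact (Finset.mem_filter.mp hL).2.2
  rw [← Finset.card_image_of_injOn hinj, ← Finset.card_union_of_disjoint hdisj]
  calc _ ≤ (Finset.Icc 1 M).card := by
        apply Finset.card_le_card
        intro x hx
        rw [Finset.mem_Icc]
        rcases Finset.mem_union.mp hx with hx | hx
        · exact ⟨Nat.one_le_iff_ne_zero.mpr (fun h => h0 (h ▸ hx)), hM x hx⟩
        · obtain ⟨L, hL, rfl⟩ := Finset.mem_image.mp hx
          have h1 := Finset.mem_filter.mp hL
          have := hM L h1.1
          omega
    _ = M := by simp

lemma gapSet_insert_max {D : Finset ℕ} {m : ℕ} (hm : ∀ x ∈ D, x < m) :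
    (gapSet (insert m D)).card =
      (gapSet D).card + if 2 ≤ m ∧ m - 1 ∉ D then 1 else 0 := by
  have hmD : m ∉ D := fun h => lt_irrefl _ (hm m h)
  have hD : D.filter (fun L => 2 ≤ L ∧ L - 1 ∉ insert m D) = gapSet D := by
    apply Finset.filter_congr
    intro x hx
    have := hm x hx
    simp only [Finset.mem_insert]
    have : x - 1 ≠ m := by omega
    tauto
  have hmm : (2 ≤ m ∧ m - 1 ∉ insert m D) ↔ (2 ≤ m ∧ m - 1 ∉ D) := by
    simp only [Finset.mem_insert]
    constructor
    · tauto
    · rintro ⟨h1, h2⟩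
      have : m - 1 ≠ m := by omega
      tauto
  rw [gapSet, Finset.filter_insert, hD]
  by_cases h : 2 ≤ m ∧ m - 1 ∉ D
  · rw [if_pos (hmm.mpr h), if_pos h, Finset.card_insert_of_notMem]
    exact fun h' => hmD (Finset.mem_filter.mp h').1
  · rw [if_neg (fun h' => h (hmm.mp h')), if_neg h, add_zero]

/-- A set of positive integers with `r` elements and `a` gaps has sum at least `T r + T a`. -/
lemma T_add_T_le_sum (D : Finset ℕ) (h0 : 0 ∉ D) :
    T D.card + T (gapSet D).card ≤ ∑ x ∈ D, x := by
  induction D using Finset.induction_on_max with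
  | empty => simp [gapSet, T_zero]
  | insert m D hm ih =>
    have hmD : m ∉ D := fun h => lt_irrefl _ (hm m h)
    have hbd : ∀ x ∈ insert m D, x ≤ m := by
      intro x hx
      rcases Finset.mem_insert.mp hx with rfl | hx
      · exact le_rfl
      · exact (hm x hx).le
    have h1 := card_add_gap_le h0 hbd
    have h2 := ih (fun h => h0 (Finset.mem_insert_of_mem h))
    rw [gapSet_insert_max hm, Finset.card_insert_of_notMem hmD] at h1 ⊢
    rw [Finset.sum_insert hmD, T_succ]
    split_ifs at h1 ⊢
    · rw [T_succ]; omega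
    · rw [add_zero]; omega

lemma eq_Icc_of_no_gap (D : Finset ℕ) (h0 : 0 ∉ D) (hg : (gapSet D).card = 0) :
    D = Finset.Icc 1 D.card := by
  -- Without gaps, `D` is closed under predecessors, so each `x ∈ D` has `{1, …, x} ⊆ D`.
  have hdown : ∀ k x, x ∈ D → 1 ≤ x - k → x - k ∈ D := by
    intro k
    induction k with
    | zero => intro x hx _; exact hx
    | succ k ih =>
      intro x hx h1
      by_contra hc
      have hk := ih x hx (by omega)
      have : x - k ∈ gapSet D :=
        Finset.mem_filter.mpr ⟨hk, by omega, by rwa [Nat.sub_sub]⟩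
      rw [Finset.card_eq_zero.mp hg] at this
      simp at this
  apply Finset.eq_of_subset_of_card_le
  · intro x hx
    have hx0 : x ≠ 0 := fun h => h0 (h ▸ hx)
    have hsub : Finset.Icc 1 x ⊆ D := by
      intro y hy
      rw [Finset.mem_Icc] at hy
      have := hdown (x - y) x hx (by omega)
      rwa [show x - (x - y) = y by omega] at this
    have := Finset.card_le_card hsub
    rw [Nat.card_Icc] at this
    rw [Finset.mem_Icc]
    omega
  · simp

/-- Equality in `T_add_T_le_sum` with at least one gap forces the maximum to be a gap element equal
to `r + a`; the remaining set again attains equality. -/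
lemma sum_eq_peel (D : Finset ℕ) (h0 : 0 ∉ D) {a : ℕ} (ha : (gapSet D).card = a + 1)
    (heq : ∑ x ∈ D, x = T D.card + T (a + 1)) :
    ∃ D' : Finset ℕ, 0 ∉ D' ∧ D = insert (D.card + (a + 1)) D' ∧ D'.card + 1 = D.card ∧
      (gapSet D').card = a ∧ ∑ x ∈ D', x = T D'.card + T a := by
  have hne : D.Nonempty := by
    rw [Finset.nonempty_iff_ne_empty]
    rintro rfl
    simp [gapSet] at ha
  set m := D.max' hne with hmdef
  have hmem : m ∈ D := D.max'_mem hne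
  obtain ⟨E, hE⟩ : ∃ E, E = D.erase m := ⟨_, rfl⟩
  have hD : D = insert m E := by rw [hE, Finset.insert_erase hmem]
  have hm : ∀ x ∈ E, x < m := by
    intro x hx
    rw [hE] at hx
    exact D.lt_max'_of_mem_erase_max' hne hx
  have hmE : m ∉ E := fun h => lt_irrefl _ (hm m h)
  have hE0 : 0 ∉ E := fun h => h0 (by rw [hD]; exact Finset.mem_insert_of_mem h)
  have hcard : D.card = E.card + 1 := by rw [hD, Finset.card_insert_of_notMem hmE]
  have hsum : ∑ x ∈ D, x = m + ∑ x ∈ E, x := by rw [hD, Finset.sum_insert hmE]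
  have hgap := gapSet_insert_max hm
  rw [← hD] at hgap
  have h1 := card_add_gap_le (M := m) h0 (fun x hx => D.le_max' x hx)
  have h2 := T_add_T_le_sum E hE0
  rw [hcard, T_succ, T_succ, hsum] at heq
  split_ifs at hgap with hc
  · have hEa : (gapSet E).card = a := by omega
    rw [hEa] at h2
    have hma : m = D.card + (a + 1) := by omega
    exact ⟨E, hE0, by rw [← hma]; exact hD, hcard.symm, hEa, by omega⟩
  · have hEa : (gapSet E).card = a + 1 := by omega
    rw [hEa, T_succ] at h2
    omega

/-! ### Splitting a partition into part sizes and repetitions -/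

lemma sum_dedup_le (R : Multiset ℕ) : ∑ x ∈ R.toFinset, x ≤ R.sum := by
  rw [Finset.sum, Multiset.map_id', Multiset.toFinset_val]
  obtain ⟨U, hU⟩ := Multiset.le_iff_exists_add.mp (Multiset.dedup_le R)
  have := congrArg Multiset.sum hU
  rw [Multiset.sum_add] at this
  omega

lemma eq_dedup_of_sum_eq (R : Multiset ℕ) (h0 : 0 ∉ R) (h : ∑ x ∈ R.toFinset, x = R.sum) :
    R = R.toFinset.val := by
  rw [Finset.sum, Multiset.map_id', Multiset.toFinset_val] at h
  obtain ⟨U, hU⟩ := Multiset.le_iff_exists_add.mp (Multiset.dedup_le R)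
  have hs : U.sum = 0 := by
    have := congrArg Multiset.sum hU
    rw [Multiset.sum_add] at this
    omega
  have hU0 : U = 0 := by
    apply Multiset.eq_zero_of_forall_notMem
    intro x hx
    have h2 := Multiset.single_le_sum (fun y _ => Nat.zero_le y) x hx
    have h3 : x = 0 := by omega
    exact h0 (by rw [hU, ← h3]; exact Multiset.mem_add.mpr (Or.inr hx))
  rw [Multiset.toFinset_val]
  conv_lhs => rw [hU, hU0, add_zero]

lemma gapBonus_eq {n : ℕ} (lam : n.Partition) :
    gapBonus lam = (gapSet lam.parts.toFinset).card := by
  simp [gapBonus, gapSet]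

/-- The repeated copies of parts: each part size with its multiplicity lowered by one. -/
def extra {n : ℕ} (lam : n.Partition) : Multiset ℕ := lam.parts - lam.parts.dedup

lemma dedup_add_extra {n : ℕ} (lam : n.Partition) :
    lam.parts.dedup + extra lam = lam.parts :=
  add_tsub_cancel_of_le (Multiset.dedup_le _)

lemma zero_notMem {n : ℕ} (lam : n.Partition) : 0 ∉ lam.parts :=
  fun h => lt_irrefl _ (lam.parts_pos h)

lemma zero_notMem_extra {n : ℕ} (lam : n.Partition) : 0 ∉ extra lam :=
  fun h => zero_notMem lam (Multiset.mem_of_le (Multiset.sub_le_self _ _) h)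

lemma multBonus_eq {n : ℕ} (lam : n.Partition) :
    multBonus lam = (extra lam).toFinset.card := by
  unfold multBonus
  congr 1
  ext x
  simp only [Finset.mem_filter, Multiset.mem_toFinset, extra]
  rw [← Multiset.count_pos (s := lam.parts - _), Multiset.count_sub, Multiset.count_dedup]
  split_ifs with h
  · simp only [h, true_and]; omega
  · simp [h]

lemma sum_split {n : ℕ} (lam : n.Partition) :
    ∑ x ∈ lam.parts.toFinset, x + (extra lam).sum = n := by
  have h := congrArg Multiset.sum (dedup_add_extra lam)
  rw [Multiset.sum_add, lam.parts_sum] at h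
  rwa [Finset.sum, Multiset.map_id', Multiset.toFinset_val]

lemma T_le_extra_sum {n : ℕ} (lam : n.Partition) : T (multBonus lam) ≤ (extra lam).sum := by
  have h1 := T_add_T_le_sum (extra lam).toFinset
    (by simpa using zero_notMem_extra lam)
  have h2 := sum_dedup_le (extra lam)
  rw [multBonus_eq]
  omega

/-- The budget inequality: support, gaps and repetitions compete for the total size `n`. -/
lemma T_budget {n : ℕ} (lam : n.Partition) :
    T (supp lam) + T (gapBonus lam) + T (multBonus lam) ≤ n := by
  have h1 := T_add_T_le_sum lam.parts.toFinset (by simpa using zero_notMem lam)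
  have h2 := T_le_extra_sum lam
  have h3 := sum_split lam
  rw [gapBonus_eq]
  unfold supp
  omega

lemma gapBonus_le {n : ℕ} (lam : n.Partition) : gapBonus lam ≤ supp lam :=
  Finset.card_filter_le _ _

lemma multBonus_le {n : ℕ} (lam : n.Partition) : multBonus lam ≤ supp lam :=
  Finset.card_filter_le _ _

/-! ### The degree bound and uniqueness -/

lemma T_budget_six {a b : ℕ} (h : T a + T b ≤ 6) : a + b ≤ 4 ∧ (a + b = 4 → a = 2 ∧ b = 2) := by
  have ha : a ≤ 3 := by
    by_contra hc
    have : T 4 ≤ T a := T_mono (by omega)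
    have : T 4 = 10 := rfl
    omega
  have hb : b ≤ 3 := by
    by_contra hc
    have : T 4 ≤ T b := T_mono (by omega)
    have : T 4 = 10 := rfl
    omega
  interval_cases a <;> interval_cases b <;> simp [T] at h ⊢

lemma deg_le (s : ℕ) (hs : 6 ≤ s) (lam : (T s + 6).Partition) :
    deg lam ≤ s * (s - 1) + 4 ∧
      (deg lam = s * (s - 1) + 4 → supp lam = s ∧ gapBonus lam = 2 ∧ multBonus lam = 2) := by
  have hb := T_budget lam
  have hA := gapBonus_le lam
  have hB := multBonus_le lam
  have hle : supp lam ≤ s := by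
    by_contra hc
    have : T (s + 1) ≤ T (supp lam) := T_mono (by omega)
    rw [T_succ] at this
    omega
  unfold deg
  rcases hle.lt_or_eq with hlt | heq
  · have : supp lam * (supp lam - 1) + 2 * supp lam ≤ s * (s - 1) := by
      obtain ⟨t, rfl⟩ : ∃ t, s = t + 1 := ⟨s - 1, by omega⟩
      generalize supp lam = r at *
      have hr : r ≤ t := by omega
      calc r * (r - 1) + 2 * r ≤ r * (r + 1) := by
            cases r with
            | zero => simp
            | succ q => simp only [Nat.add_sub_cancel]; nlinarith
        _ ≤ (t + 1) * (t + 1 - 1) := by simp only [Nat.add_sub_cancel]; nlinarith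
    constructor
    · omega
    · intro h; omega
  · rw [heq] at hb ⊢
    have := T_budget_six (a := gapBonus lam) (b := multBonus lam) (by omega)
    refine ⟨by omega, fun h => ⟨rfl, this.2 (by omega)⟩⟩

/-- The multiset `(s + 2, s, s - 2, …, 2, 2, 1, 1)`. -/
def extremal (s : ℕ) : Multiset ℕ :=
  (s + 2) ::ₘ s ::ₘ 2 ::ₘ 1 ::ₘ (Finset.Icc 1 (s - 2)).val

lemma parts_eq_extremal (s : ℕ) (hs : 6 ≤ s) (lam : (T s + 6).Partition)
    (h1 : supp lam = s) (h2 : gapBonus lam = 2) (h3 : multBonus lam = 2) :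
    lam.parts = extremal s := by
  have hD0 : 0 ∉ lam.parts.toFinset := by simpa using zero_notMem lam
  have hR0 : 0 ∉ (extra lam).toFinset := by simpa using zero_notMem_extra lam
  have hD := T_add_T_le_sum _ hD0
  have hR := T_add_T_le_sum _ hR0
  have hR' := sum_dedup_le (extra lam)
  have hsum := sum_split lam
  have hT2 : T 2 = 3 := rfl
  rw [← multBonus_eq, h3, hT2] at hR
  rw [← gapBonus_eq, h2, hT2] at hD
  change T (supp lam) + 3 ≤ _ at hD
  rw [h1] at hD
  -- Both lower bounds are attained, since they add up to `T s + 6`.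
  have hg : (gapSet (extra lam).toFinset).card = 0 := by
    by_contra hc
    have : T 1 ≤ T (gapSet (extra lam).toFinset).card := T_mono (by omega)
    have : T 1 = 1 := rfl
    omega
  have hRset := eq_Icc_of_no_gap _ hR0 hg
  rw [← multBonus_eq, h3] at hRset
  have hRval := eq_dedup_of_sum_eq (extra lam) (zero_notMem_extra lam) (by omega)
  rw [hRset] at hRval
  have hDc : lam.parts.toFinset.card = s := h1
  obtain ⟨E, hE0, hDE, hEc, hEg, hEs⟩ := sum_eq_peel lam.parts.toFinset hD0 (a := 1)
    (by rw [← gapBonus_eq, h2]) (by rw [hDc]; change _ = T s + T 2; omega)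
  obtain ⟨F, hF0, hEF, hFc, hFg, hFs⟩ := sum_eq_peel E hE0 (a := 0) hEg hEs
  have hF := eq_Icc_of_no_gap F hF0 hFg
  rw [show F.card = s - 2 by omega] at hF
  rw [show E.card + (0 + 1) = s by omega, hF] at hEF
  rw [hDc, hEF] at hDE
  rw [← dedup_add_extra lam, hRval, ← Multiset.toFinset_val, hDE, Finset.insert_val_of_notMem,
    Finset.insert_val_of_notMem]
  · rw [show (Finset.Icc 1 2).val = 2 ::ₘ 1 ::ₘ (0 : Multiset ℕ) by decide]
    unfold extremal
    simp only [← Multiset.singleton_add, add_zero]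
    abel
  · simp only [Finset.mem_Icc]; omega
  · simp only [Finset.mem_insert, Finset.mem_Icc]; omega

/-! ### The extremal partition -/

lemma mem_extremal (s : ℕ) (hs : 6 ≤ s) (x : ℕ) :
    x ∈ extremal s ↔ x = s + 2 ∨ x = s ∨ (1 ≤ x ∧ x ≤ s - 2) := by
  simp only [extremal, Multiset.mem_cons, Finset.mem_val, Finset.mem_Icc]
  omega

lemma toFinset_extremal (s : ℕ) (hs : 6 ≤ s) :
    (extremal s).toFinset = insert (s + 2) (insert s (Finset.Icc 1 (s - 2))) := by
  ext x
  simp only [Multiset.mem_toFinset, mem_extremal s hs, Finset.mem_insert, Finset.mem_Icc]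

lemma count_extremal (s : ℕ) (hs : 6 ≤ s) (x : ℕ) :
    2 ≤ (extremal s).count x ↔ x = 1 ∨ x = 2 := by
  have hc : (Finset.Icc 1 (s - 2)).val.count x = if 1 ≤ x ∧ x ≤ s - 2 then 1 else 0 := by
    rw [Multiset.count_eq_of_nodup (Finset.nodup _)]
    simp only [Finset.mem_val, Finset.mem_Icc]
  simp only [extremal, Multiset.count_cons, hc]
  split_ifs <;> omega

lemma sum_Icc_T (m : ℕ) : ∑ x ∈ Finset.Icc 1 m, x = T m := by
  induction m with
  | zero => rfl
  | succ k ih => rw [Finset.sum_Icc_succ_top (by omega), ih, T_succ]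

lemma sum_extremal (s : ℕ) (hs : 6 ≤ s) : (extremal s).sum = T s + 6 := by
  obtain ⟨t, rfl⟩ : ∃ t, s = t + 2 := ⟨s - 2, by omega⟩
  have h := sum_Icc_T t
  rw [Finset.sum, Multiset.map_id'] at h
  simp only [extremal, Multiset.sum_cons, Nat.add_sub_cancel, h, T_succ]
  omega

lemma extremal_stats (s : ℕ) (hs : 6 ≤ s) (lam : (T s + 6).Partition)
    (h : lam.parts = extremal s) :
    supp lam = s ∧ gapBonus lam = 2 ∧ multBonus lam = 2 := by
  refine ⟨?_, ?_, ?_⟩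
  · rw [supp, h, toFinset_extremal s hs, Finset.card_insert_of_notMem,
      Finset.card_insert_of_notMem, Nat.card_Icc]
    · omega
    · simp only [Finset.mem_Icc]; omega
    · simp only [Finset.mem_insert, Finset.mem_Icc]; omega
  · have : lam.parts.toFinset.filter (fun L => 2 ≤ L ∧ (L - 1) ∉ lam.parts) = {s, s + 2} := by
      ext x
      simp only [h, Finset.mem_filter, Multiset.mem_toFinset, mem_extremal s hs,
        Finset.mem_insert, Finset.mem_singleton]
      omega
    rw [gapBonus, this, Finset.card_pair (by omega)]
  · have : lam.parts.toFinset.filter (fun L => 2 ≤ lam.parts.count L) = {1, 2} := by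
      ext x
      simp only [h, Finset.mem_filter, Multiset.mem_toFinset, mem_extremal s hs,
        count_extremal s hs, Finset.mem_insert, Finset.mem_singleton]
      omega
    rw [multBonus, this, Finset.card_pair (by omega)]

lemma maxDeg_eq (s : ℕ) (hs : 6 ≤ s) : maxDeg (T s + 6) = s * (s - 1) + 4 := by
  apply le_antisymm
  · exact Finset.sup_le (fun lam _ => (deg_le s hs lam).1)
  · let lam : (T s + 6).Partition :=
      { parts := extremal s
        parts_pos := by
          intro i hi
          rw [mem_extremal s hs] at hi
          omega
        parts_sum := sum_extremal s hs }
    obtain ⟨h1, h2, h3⟩ := extremal_stats s hs lam rfl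
    have hdeg : deg lam = s * (s - 1) + 4 := by rw [deg, h1, h2, h3]
    rw [← hdeg]
    exact Finset.le_sup (f := fun lam : (T s + 6).Partition => deg lam) (Finset.mem_univ lam)

/-! ### Conjugation -/

/-- `IsConjugate` as defined relates every partition to itself: the right-hand side counts the
parts of `lam` equal to `k`. -/
lemma isConjugate_self {n : ℕ} (lam : n.Partition) : IsConjugate lam lam := by
  intro k _
  have h : ∀ M : Multiset ℕ, M.countP (fun p => k ≤ p) =
      M.count k + M.countP (fun p => k + 1 ≤ p) := by
    intro M
    induction M using Multiset.induction_on with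
    | empty => simp
    | cons a M ih =>
      simp only [Multiset.countP_cons, Multiset.count_cons, ih]
      split_ifs <;> omega
  rw [h, Nat.add_sub_cancel]

/-- Self-conjugacy of the extremal partition in the usual sense. The `i`-th largest part is at least
`j` exactly when at least `i` parts are `≥ j`, so the statement says that the Young diagram
is symmetric under reflection in the diagonal. -/
theorem extremal_diagram_symmetric (s : ℕ) (hs : 6 ≤ s) (i j : ℕ) (hi : 1 ≤ i) (hj : 1 ≤ j) :
    i ≤ (extremal s).countP (fun p => j ≤ p) ↔ j ≤ (extremal s).countP (fun p => i ≤ p) := by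
  have hc : ∀ k, 1 ≤ k → (Finset.Icc 1 (s - 2)).val.countP (fun p => k ≤ p) = s - 1 - k := by
    intro k hk
    rw [Multiset.countP_eq_card_filter, ← Finset.filter_val, Finset.card_val,
      show (Finset.Icc 1 (s - 2)).filter (fun p => k ≤ p) = Finset.Icc k (s - 2) by
        ext x; simp only [Finset.mem_filter, Finset.mem_Icc]; omega, Nat.card_Icc]
    omega
  simp only [extremal, Multiset.countP_cons, hc i hi, hc j hj]
  split_ifs <;> omega

/-! ### The sixth window -/

/-- for `n = T s + 6` with `s ≥ 6`, the unique maximizer is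
`(s+2, s, s-2, s-3, …, 2, 2, 1, 1)`; it has `A = B = 2` and is self-conjugate. -/
theorem sixth_window (s : ℕ) (hs : 6 ≤ s) :
    (∀ lam : (T s + 6).Partition,
        deg lam = maxDeg (T s + 6) ↔
          lam.parts = (s + 2) ::ₘ s ::ₘ 2 ::ₘ 1 ::ₘ (Finset.Icc 1 (s - 2)).val) ∧
      (∀ lam : (T s + 6).Partition,
        lam.parts = (s + 2) ::ₘ s ::ₘ 2 ::ₘ 1 ::ₘ (Finset.Icc 1 (s - 2)).val →
          gapBonus lam = 2 ∧ multBonus lam = 2 ∧ IsConjugate lam lam) := by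
  refine ⟨fun lam => ?_, fun lam h => ?_⟩
  · rw [maxDeg_eq s hs]
    constructor
    · intro h
      obtain ⟨h1, h2, h3⟩ := (deg_le s hs lam).2 h
      exact parts_eq_extremal s hs lam h1 h2 h3
    · intro h
      obtain ⟨h1, h2, h3⟩ := extremal_stats s hs lam h
      rw [deg, h1, h2, h3]
  · obtain ⟨_, h2, h3⟩ := extremal_stats s hs lam h
    exact ⟨h2, h3, isConjugate_self lam⟩

end PartitionDegree
end

section
/- Let s ≥ 1, let 0 ≤ q ≤ s, and set n = T_s + q. Let λ be a partition of n with deg(λ) = Δ_n. Then: (1) if L is a distinct part size of λ occurring with multiplicity at least 2, then L ≤ q; (2) if L ≥ 2 is a distinct part size of λ such that L−1 is not a part size of λ, then the number of distinct part sizes of λ that are ≥ L is at most q. -/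
/-!
The point is that a maximizer of `T s + q` with `q ≤ s` has exactly `s` distinct part sizes.
More than `s` is impossible, since `r` distinct positive integers sum to at least `T r`
(`card_mul_succ_le_two_mul_sum`). If there are `r < s`, both bonus counts are at most `r`, so the
degree is at most `r (r - 1) + 2 r = r (r + 1) ≤ s (s - 1)`. On the other hand the partition
`1 + 2 + ⋯ + s` with `q` additional ones has degree at least `s (s - 1)`, with one more if
`q ≥ 1` (`le_maxDeg`). Hence `q = 0`, `s = r + 1`, and both bonus counts equal `r`: every part
size is repeated and `1` is not a part size, so the sum is at least `2 (T r + r)`, which exceeds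
`T (r + 1)` as `r > 0`.

Once there are exactly `s` distinct part sizes, a repeated part `L` forces the sum to be at least
`T s + L`, and a gap below `L` with `k` distinct sizes `≥ L` forces it to be at least `T s + k`
(lower each of these `k` sizes by one: the sizes stay distinct and positive). Both conclusions
follow.
-/

namespace PartitionDegree

lemma two_mul_T (m : ℕ) : 2 * T m = m * (m + 1) :=
  Nat.mul_div_cancel' (Nat.even_mul_succ_self m).two_dvd

/-- `r` distinct positive integers sum to at least `T r`. -/
lemma card_mul_succ_le_two_mul_sum (S : Finset ℕ) (hS : ∀ x ∈ S, 0 < x) :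
    S.card * (S.card + 1) ≤ 2 * ∑ x ∈ S, x := by
  induction S using Finset.induction_on_max with
  | empty => simp
  | insert a S ha ih =>
    have haS : a ∉ S := fun h => lt_irrefl _ (ha a h)
    have ih' := ih fun x hx => hS x (Finset.mem_insert_of_mem hx)
    have hsub : S ⊆ Finset.Ioo 0 a := fun x hx =>
      Finset.mem_Ioo.2 ⟨hS x (Finset.mem_insert_of_mem hx), ha x hx⟩
    have hcard := Finset.card_le_card hsub
    have hpos := hS a (Finset.mem_insert_self a S)
    rw [Nat.card_Ioo] at hcard
    rw [Finset.card_insert_of_notMem haS, Finset.sum_insert haS]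
    have h : S.card + 1 ≤ a := by omega
    nlinarith

/-- If `L - 1` is missing from a set of `r` positive integers, the sum is at least `T r` plus the
number of elements `≥ L`. Here `L` itself need not belong to the set. -/
lemma sum_ge_of_gap (S : Finset ℕ) (hS : ∀ x ∈ S, 0 < x) (L : ℕ) (hL : 2 ≤ L)
    (hgap : L - 1 ∉ S) :
    S.card * (S.card + 1) + 2 * (S.filter (fun p => L ≤ p)).card ≤ 2 * ∑ x ∈ S, x := by
  -- Lowering every element `≥ L` by one is injective on `S` because `L - 1 ∉ S`.
  let f : ℕ → ℕ := fun x => if L ≤ x then x - 1 else x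
  have hne : ∀ x ∈ S, x ≠ L - 1 := fun x hx h => hgap (h ▸ hx)
  have hinj : Set.InjOn f S := by
    intro x hx y hy hxy
    have h1 := hne x hx
    have h2 := hne y hy
    simp only [f] at hxy
    split_ifs at hxy <;> omega
  have hpos : ∀ x ∈ S.image f, 0 < x := by
    intro y hy
    obtain ⟨x, hx, rfl⟩ := Finset.mem_image.1 hy
    have := hS x hx
    simp only [f]
    split_ifs <;> omega
  have key := card_mul_succ_le_two_mul_sum _ hpos
  rw [Finset.card_image_of_injOn hinj, Finset.sum_image hinj] at key
  have hsum : ∑ x ∈ S, x = ∑ x ∈ S, f x + (S.filter (fun p => L ≤ p)).card := by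
    rw [Finset.card_filter, ← Finset.sum_add_distrib]
    refine Finset.sum_congr rfl fun x _ => ?_
    simp only [f]
    split_ifs <;> omega
  omega

/-- The partition `1 + 2 + ⋯ + s` with `q` additional ones bounds the maximal degree below. -/
lemma le_maxDeg (s q : ℕ) (hs : 1 ≤ s) :
    s * (s - 1) + min q 1 ≤ maxDeg (T s + q) := by
  have hIcc : ∑ x ∈ Finset.Icc 1 s, x = T s := by
    have h := Finset.sum_range_id_mul_two (s + 1)
    have h2 : ∑ x ∈ Finset.Icc 1 s, x = ∑ x ∈ Finset.range (s + 1), x := by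
      refine Finset.sum_subset (fun x hx => ?_) (fun x hx hx' => ?_)
      · simp only [Finset.mem_Icc, Finset.mem_range] at *; omega
      · simp only [Finset.mem_Icc, Finset.mem_range] at *; omega
    have h3 := two_mul_T s
    rw [h2]
    simp only [Nat.add_sub_cancel] at h
    nlinarith
  let mu : (T s + q).Partition :=
    { parts := (Finset.Icc 1 s).val + Multiset.replicate q 1
      parts_pos := by
        intro i hi
        rcases Multiset.mem_add.1 hi with h | h
        · exact (Finset.mem_Icc.1 (Finset.mem_def.2 h)).1
        · rw [Multiset.eq_of_mem_replicate h]; exact one_pos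
      parts_sum := by
        rw [Multiset.sum_add, Multiset.sum_replicate, Finset.sum_val, smul_eq_mul, mul_one]
        rw [← hIcc]; rfl }
  have hfin : mu.parts.toFinset = Finset.Icc 1 s := by
    ext x
    simp only [mu, Multiset.mem_toFinset, Multiset.mem_add, Finset.mem_val,
      Multiset.mem_replicate, Finset.mem_Icc]
    omega
  have hsupp : supp mu = s := by
    rw [supp, hfin, Nat.card_Icc, Nat.add_sub_cancel]
  have hmult : min q 1 ≤ multBonus mu := by
    rcases Nat.eq_zero_or_pos q with rfl | hq
    · simp
    · refine (min_le_right _ _).trans (Finset.card_pos.2 ⟨1, Finset.mem_filter.2 ⟨?_, ?_⟩⟩)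
      · rw [hfin]; simp [hs]
      · have h1 : 1 ≤ Multiset.count 1 (Finset.Icc 1 s).val :=
          Multiset.one_le_count_iff_mem.2 (by simp [hs])
        simp only [mu, Multiset.count_add, Multiset.count_replicate_self]
        omega
  have hle : deg mu ≤ maxDeg (T s + q) :=
    Finset.le_sup (f := fun lam : (T s + q).Partition => deg lam) (Finset.mem_univ mu)
  rw [deg, hsupp] at hle
  omega

lemma sum_count_mul {n : ℕ} (lam : n.Partition) :
    ∑ x ∈ lam.parts.toFinset, lam.parts.count x * x = n := by
  have h := Finset.sum_multiset_count lam.parts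
  rw [lam.parts_sum] at h
  simpa using h.symm

lemma sum_toFinset_le {n : ℕ} (lam : n.Partition) : ∑ x ∈ lam.parts.toFinset, x ≤ n := by
  conv_rhs => rw [← sum_count_mul lam]
  refine Finset.sum_le_sum fun x hx => Nat.le_mul_of_pos_left _ ?_
  exact Multiset.count_pos.2 (Multiset.mem_toFinset.1 hx)

lemma sum_toFinset_add_le {n : ℕ} (lam : n.Partition) (L : ℕ) (hL : L ∈ lam.parts)
    (h2 : 2 ≤ lam.parts.count L) : ∑ x ∈ lam.parts.toFinset, x + L ≤ n := by
  have hmem := Multiset.mem_toFinset.2 hL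
  have h := sum_count_mul lam
  rw [← Finset.add_sum_erase _ _ hmem] at h ⊢
  have hle : ∑ x ∈ lam.parts.toFinset.erase L, x
      ≤ ∑ x ∈ lam.parts.toFinset.erase L, lam.parts.count x * x := by
    refine Finset.sum_le_sum fun x hx => Nat.le_mul_of_pos_left _ ?_
    exact Multiset.count_pos.2 (Multiset.mem_toFinset.1 (Finset.mem_of_mem_erase hx))
  nlinarith

/-- A maximizer has exactly `s` distinct part sizes. -/
lemma supp_eq_of_max (s q : ℕ) (hs : 1 ≤ s) (hqs : q ≤ s)
    (lam : (T s + q).Partition) (hmax : deg lam = maxDeg (T s + q)) :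
    lam.parts.toFinset.card = s := by
  have hpos : ∀ x ∈ lam.parts.toFinset, 0 < x := fun x hx =>
    lam.parts_pos (Multiset.mem_toFinset.1 hx)
  have hT := two_mul_T s
  have hsum := card_mul_succ_le_two_mul_sum _ hpos
  have hle := sum_toFinset_le lam
  have hlow := le_maxDeg s q hs
  rw [← hmax, deg, supp] at hlow
  have hA : gapBonus lam ≤ lam.parts.toFinset.card := Finset.card_filter_le _ _
  have hB : multBonus lam ≤ lam.parts.toFinset.card := Finset.card_filter_le _ _
  have hr0 : 0 < lam.parts.toFinset.card := by
    rcases Nat.eq_zero_or_pos lam.parts.toFinset.card with h0 | h0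
    · have h1 := sum_count_mul lam
      rw [Finset.card_eq_zero.1 h0, Finset.sum_empty] at h1
      nlinarith
    · exact h0
  generalize hr : lam.parts.toFinset.card = r at *
  rcases lt_trichotomy r s with hlt | heq | hgt
  · exfalso
    obtain ⟨t, rfl⟩ : ∃ t, r = t + 1 := ⟨r - 1, by omega⟩
    obtain ⟨u, rfl⟩ : ∃ u, s = t + 2 + u := ⟨s - (t + 2), by omega⟩
    simp only [Nat.add_sub_cancel] at hlow
    rw [show t + 2 + u - 1 = t + 1 + u by omega] at hlow
    have hu : u = 0 := by nlinarith [Nat.zero_le (min q 1)]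
    subst hu
    have hlin : 2 * t + 2 + min q 1 ≤ gapBonus lam + multBonus lam := by nlinarith
    have hq : q = 0 := by omega
    subst hq
    have hAeq : gapBonus lam = t + 1 := by omega
    have hBeq : multBonus lam = t + 1 := by omega
    have hAall := Finset.filter_card_eq (hAeq.trans hr.symm)
    have hBall := Finset.filter_card_eq (hBeq.trans hr.symm)
    have hone : 2 - 1 ∉ lam.parts.toFinset := fun h => absurd (hAall 1 h).1 (by norm_num)
    have hgap := sum_ge_of_gap _ hpos 2 le_rfl hone
    rw [Finset.filter_true_of_mem (fun x hx => (hAall x hx).1), hr] at hgap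
    have hdouble : 2 * ∑ x ∈ lam.parts.toFinset, x ≤ T (t + 2 + 0) + 0 := by
      conv_rhs => rw [← sum_count_mul lam]
      rw [Finset.mul_sum]
      exact Finset.sum_le_sum fun x hx => Nat.mul_le_mul_right _ (hBall x hx)
    nlinarith
  · exact heq
  · exfalso
    nlinarith

/-- localization of active coordinates in a maximizer of `T s + q`:
(1) every part size with multiplicity at least `2` is at most `q`;
(2) for every part size `L ≥ 2` with `L - 1` not a part size, the number of distinct
part sizes `≥ L` is at most `q`. -/
theorem localization (s q : ℕ) (hs : 1 ≤ s) (hqs : q ≤ s)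
    (lam : (T s + q).Partition) (hmax : deg lam = maxDeg (T s + q)) :
    (∀ L : ℕ, L ∈ lam.parts → 2 ≤ lam.parts.count L → L ≤ q) ∧
      (∀ L : ℕ, 2 ≤ L → L ∈ lam.parts → (L - 1) ∉ lam.parts →
        (lam.parts.toFinset.filter (fun p => L ≤ p)).card ≤ q) := by
  have hcard := supp_eq_of_max s q hs hqs lam hmax
  have hpos : ∀ x ∈ lam.parts.toFinset, 0 < x := fun x hx =>
    lam.parts_pos (Multiset.mem_toFinset.1 hx)
  have hT := two_mul_T s
  refine ⟨fun L hL h2 => ?_, fun L h2 _ hgap => ?_⟩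
  · have h1 := card_mul_succ_le_two_mul_sum _ hpos
    have h3 := sum_toFinset_add_le lam L hL h2
    rw [hcard] at h1
    omega
  · have h1 := sum_ge_of_gap _ hpos L h2 (fun h => hgap (Multiset.mem_toFinset.1 h))
    have h3 := sum_toFinset_le lam
    rw [hcard] at h1
    omega

end PartitionDegree
end
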